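/- For any Dyck path π of semilength n, the bivariate Vandermonde determinant Δ_{X(π)}(x,y), where X(π) = ((d_1,a_1),…,(d_n,a_n)) is the tuple of (dinv, area) pairs of π, is a nonzero polynomial in ℂ[x_1,…,x_n,y_1,…,y_n]. -/

import Mathlib

open MvPolynomial

/-- The area sequence of a Dyck path of semilength `n`: a tuple
`a : Fin n → ℕ` with first entry zero and `a (i+1) ≤ a i + 1`. -/
def IsDyckArea {n : ℕ} (a : Fin n → ℕ) : Prop :=
  (∀ i : Fin n, (i : ℕ) = 0 → a i = 0) ∧
  (∀ i j : Fin n, (j : ℕ) = (i : ℕ) + 1 → a j ≤ a i + 1)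

/-- The dinv sequence of a Dyck path encoded by its area sequence:
`d i = #{ j > i | a j = a i or a j = a i - 1 }`. -/
def dinvSeq {n : ℕ} (a : Fin n → ℕ) (i : Fin n) : ℕ :=
  (Finset.univ.filter (fun j : Fin n => i < j ∧ (a j = a i ∨ a j + 1 = a i))).card

/-- The bivariate Vandermonde determinant `Δ_X(x,y) = det (x_i^{α_j} y_i^{β_j})`
for a tuple `X = ((α_1,β_1),…,(α_n,β_n))`, a polynomial in
`ℂ[x_1,…,x_n,y_1,…,y_n]` where `x i = X (Sum.inl i)` and `y i = X (Sum.inr i)`. -/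
noncomputable def biVandermonde (n : ℕ) (E : Fin n → ℕ × ℕ) :
    MvPolynomial (Fin n ⊕ Fin n) ℂ :=
  Matrix.det (Matrix.of fun i j : Fin n =>
    (X (Sum.inl i) : MvPolynomial (Fin n ⊕ Fin n) ℂ) ^ (E j).1 *
      (X (Sum.inr i) : MvPolynomial (Fin n ⊕ Fin n) ℂ) ^ (E j).2)

/-- The Vandermonde determinant of an injective tuple of exponents is nonzero. -/
theorem biVandermonde_ne_zero_of_injective {n : ℕ} (E : Fin n → ℕ × ℕ)
    (hE : Function.Injective E) : biVandermonde n E ≠ 0 := by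
  classical
  let m : Equiv.Perm (Fin n) → ((Fin n ⊕ Fin n) →₀ ℕ) := fun σ =>
    ∑ i, (Finsupp.single (Sum.inl (σ i)) (E i).1 + Finsupp.single (Sum.inr (σ i)) (E i).2)
  have hl : ∀ σ i, m σ (Sum.inl (σ i)) = (E i).1 := by
    intro σ i
    simp [m, Finsupp.finset_sum_apply, Finsupp.single_apply]
  have hr : ∀ σ i, m σ (Sum.inr (σ i)) = (E i).2 := by
    intro σ i
    simp [m, Finsupp.finset_sum_apply, Finsupp.single_apply]
  have hm : ∀ σ, m σ = m 1 → σ = 1 := by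
    intro σ h
    ext i
    have h1 := hl σ i
    have h2 := hr σ i
    have h3 := hl 1 (σ i)
    have h4 := hr 1 (σ i)
    rw [h] at h1 h2
    rw [Equiv.Perm.one_apply] at h3 h4
    have : E (σ i) = E i := Prod.ext (h3.symm.trans h1) (h4.symm.trans h2)
    rw [hE this]
    rfl
  have hprod : ∀ σ : Equiv.Perm (Fin n),
      (∏ i, ((X (Sum.inl (σ i)) : MvPolynomial (Fin n ⊕ Fin n) ℂ) ^ (E i).1 *
        (X (Sum.inr (σ i)) : MvPolynomial (Fin n ⊕ Fin n) ℂ) ^ (E i).2)) =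
      monomial (m σ) 1 := by
    intro σ
    simp only [m, monomial_sum_one, X_pow_eq_monomial, monomial_mul, mul_one]
  intro h0
  have h1 : coeff (m 1) (biVandermonde n E) = 1 := by
    rw [biVandermonde, Matrix.det_apply']
    simp only [Matrix.of_apply, hprod]
    rw [coeff_sum, Finset.sum_eq_single 1]
    · simp
    · intro σ _ hσ
      have hne : m σ ≠ m 1 := fun h => hσ (hm σ h)
      have hc : (((Equiv.Perm.sign σ : ℤˣ) : ℤ) : MvPolynomial (Fin n ⊕ Fin n) ℂ) =
          C (((Equiv.Perm.sign σ : ℤˣ) : ℤ) : ℂ) := by simp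
      rw [hc, coeff_C_mul, coeff_monomial, if_neg hne, mul_zero]
    · simp
  rw [h0] at h1
  simp at h1

theorem dinvSeq_lt {n : ℕ} (a : Fin n → ℕ) {i j : Fin n} (hij : i < j) (h : a i = a j) :
    dinvSeq a j < dinvSeq a i := by
  apply Finset.card_lt_card
  rw [Finset.ssubset_iff_of_subset]
  · exact ⟨j, by simp [hij, h], by simp⟩
  · intro k hk
    simp only [Finset.mem_filter, Finset.mem_univ, true_and] at hk ⊢
    rw [h]
    exact ⟨hij.trans hk.1, hk.2⟩

/-- For a Dyck path with area sequence `a` and dinv sequence `d`, the bivariate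
Vandermonde determinant `Δ_{X(π)}` with `X(π) = ((d_1,a_1),…,(d_n,a_n))` is a
nonzero polynomial. -/
theorem biVandermonde_dyck_ne_zero {n : ℕ} (a : Fin n → ℕ) (ha : IsDyckArea a) :
    biVandermonde n (fun i => (dinvSeq a i, a i)) ≠ 0 := by
  apply biVandermonde_ne_zero_of_injective
  intro i j hij
  simp only [Prod.mk.injEq] at hij
  rcases lt_trichotomy i j with h | h | h
  · exact absurd hij.1 (dinvSeq_lt a h hij.2).ne'
  · exact h
  · exact absurd hij.1 (dinvSeq_lt a h hij.2.symm).ne
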